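/- (Convergence radius.) Under the hypotheses of the main stability theorem — A := −((L + αM) ⊗ I_p), μ := λ_max((A + Aᵀ)/2) < 0, continuous e, e_L with ‖e(t)‖ ≤ √n·ḡ, ‖e_L(t)‖ ≤ ḡ, differentiable x_L with ‖ẋ_L(t)‖ ≤ c_r, and δ differentiable satisfying δ̇(t) = A δ(t) + A e(t) + (αM ⊗ I_p)(𝟙_n ⊗ e_L(t)) − 𝟙_n ⊗ ẋ_L(t) for t ≥ 0 — the disagreement converges to the ball of radius ε := ((√n·‖A‖ + α·‖M·𝟙_n‖)·ḡ + √n·c_r)/|μ| around the reference, in the sense that limsup_{t→∞} ‖δ(t)‖ ≤ ε. -/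

import Mathlib

open Matrix Filter
open scoped Kronecker

/-- The Euclidean norm of a finitely-indexed real vector. -/
noncomputable def eNorm {ι : Type*} [Fintype ι] (x : ι → ℝ) : ℝ :=
  ‖(EuclideanSpace.equiv ι ℝ).symm x‖

/-- The spectral norm of a real matrix: its operator norm as a linear map between
Euclidean spaces. -/
noncomputable def specNorm {ι κ : Type*} [Fintype ι] [Fintype κ] [DecidableEq κ]
    (A : Matrix ι κ ℝ) : ℝ :=
  ‖LinearMap.toContinuousLinearMap (Matrix.toEuclideanLin A)‖

lemma eNorm_sq' {ι : Type*} [Fintype ι] (x : ι → ℝ) : eNorm x ^ 2 = x ⬝ᵥ x := by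
  unfold eNorm
  rw [EuclideanSpace.norm_sq_eq]
  simp [dotProduct, sq]

lemma eNorm_nonneg' {ι : Type*} [Fintype ι] (x : ι → ℝ) : 0 ≤ eNorm x := norm_nonneg _

lemma eNorm_add_le' {ι : Type*} [Fintype ι] (x y : ι → ℝ) :
    eNorm (x + y) ≤ eNorm x + eNorm y := by
  unfold eNorm
  rw [map_add]; exact norm_add_le _ _

lemma eNorm_sub_le' {ι : Type*} [Fintype ι] (x y : ι → ℝ) :
    eNorm (x - y) ≤ eNorm x + eNorm y := by
  unfold eNorm
  rw [map_sub]; exact norm_sub_le _ _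

lemma dot_le_eNorm {ι : Type*} [Fintype ι] (x y : ι → ℝ) :
    x ⬝ᵥ y ≤ eNorm x * eNorm y := by
  unfold eNorm
  refine le_trans (le_of_eq ?_) (real_inner_le_norm _ _)
  simp [dotProduct, PiLp.inner_apply, mul_comm]

lemma eNorm_mulVec_le {ι : Type*} [Fintype ι] [DecidableEq ι] (A : Matrix ι ι ℝ) (x : ι → ℝ) :
    eNorm (A *ᵥ x) ≤ specNorm A * eNorm x := by
  unfold eNorm specNorm
  exact (LinearMap.toContinuousLinearMap (Matrix.toEuclideanLin A)).le_opNorm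
    ((EuclideanSpace.equiv ι ℝ).symm x)

lemma eNorm_tensor {n p : ℕ} (u : Fin n → ℝ) (v : Fin p → ℝ) :
    eNorm (fun ij : Fin n × Fin p => u ij.1 * v ij.2) = eNorm u * eNorm v := by
  rw [← sq_eq_sq₀ (eNorm_nonneg' _) (mul_nonneg (eNorm_nonneg' _) (eNorm_nonneg' _)),
    mul_pow, eNorm_sq', eNorm_sq', eNorm_sq']
  simp only [dotProduct, Fintype.sum_prod_type, Finset.sum_mul_sum]
  exact Finset.sum_congr rfl fun i _ => Finset.sum_congr rfl fun j _ => by ring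

lemma eNorm_one (n : ℕ) : eNorm (fun _ : Fin n => (1 : ℝ)) = Real.sqrt n := by
  rw [← Real.sqrt_sq (eNorm_nonneg' _), eNorm_sq']
  simp [dotProduct]

lemma eNorm_smul' {ι : Type*} [Fintype ι] (a : ℝ) (ha : 0 ≤ a) (x : ι → ℝ) :
    eNorm (a • x) = a * eNorm x := by
  unfold eNorm
  rw [map_smul, norm_smul, Real.norm_of_nonneg ha]

lemma kron_mulVec {n p : ℕ} (M : Matrix (Fin n) (Fin n) ℝ) (v : Fin p → ℝ) :
    (M ⊗ₖ (1 : Matrix (Fin p) (Fin p) ℝ)).mulVec (fun ij => v ij.2)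
      = fun ij => (M.mulVec fun _ => (1 : ℝ)) ij.1 * v ij.2 := by
  ext ⟨i, j⟩
  simp [mulVec, dotProduct, Fintype.sum_prod_type, Matrix.one_apply, Finset.sum_mul]

lemma rayleigh {ι : Type*} [Fintype ι] [DecidableEq ι] (S : Matrix ι ι ℝ) (hS : S.IsHermitian)
    (x : ι → ℝ) : x ⬝ᵥ (S *ᵥ x) ≤ (⨆ i, hS.eigenvalues i) * (x ⬝ᵥ x) := by
  have key : ∀ y : ι → ℝ, x ⬝ᵥ y = ∑ i, (x ⬝ᵥ ⇑(hS.eigenvectorBasis i)) *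
      (⇑(hS.eigenvectorBasis i) ⬝ᵥ y) := by
    intro y
    have h := hS.eigenvectorBasis.sum_inner_mul_inner (WithLp.toLp 2 x) (WithLp.toLp 2 y)
    simp only [PiLp.inner_apply, RCLike.inner_apply, conj_trivial] at h
    simp only [dotProduct]
    calc _ = _ := Finset.sum_congr rfl fun i _ => mul_comm _ _
      _ = _ := h.symm
      _ = _ := Finset.sum_congr rfl fun i _ => by
        congr 1 <;> exact Finset.sum_congr rfl fun i _ => mul_comm _ _
  rw [key (S *ᵥ x), key x, Finset.mul_sum]
  refine Finset.sum_le_sum fun i _ => ?_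
  have hT : Sᵀ = S := by
    rw [← conjTranspose_eq_transpose_of_trivial]; exact hS
  have h1 : ⇑(hS.eigenvectorBasis i) ⬝ᵥ (S *ᵥ x)
      = hS.eigenvalues i * (⇑(hS.eigenvectorBasis i) ⬝ᵥ x) := by
    rw [dotProduct_mulVec, ← mulVec_transpose, hT, hS.mulVec_eigenvectorBasis, smul_dotProduct,
      smul_eq_mul]
  rw [h1, dotProduct_comm x]
  have h2 : hS.eigenvalues i ≤ ⨆ i, hS.eigenvalues i := le_ciSup (Set.finite_range _).bddAbove i
  nlinarith [mul_self_nonneg (⇑(hS.eigenvectorBasis i) ⬝ᵥ x)]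

lemma rayleigh' {ι : Type*} [Fintype ι] [DecidableEq ι] (A : Matrix ι ι ℝ)
    (hS : (((1 : ℝ) / 2) • (A + Aᵀ)).IsHermitian)
    (x : ι → ℝ) : x ⬝ᵥ (A *ᵥ x) ≤ (⨆ i, hS.eigenvalues i) * (x ⬝ᵥ x) := by
  refine le_trans (le_of_eq ?_) (rayleigh _ hS x)
  have : x ⬝ᵥ (Aᵀ *ᵥ x) = x ⬝ᵥ (A *ᵥ x) := by
    rw [mulVec_transpose, dotProduct_comm, dotProduct_mulVec]
  rw [smul_mulVec, add_mulVec, dotProduct_smul, dotProduct_add, this, smul_eq_mul]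
  ring

/-- **Convergence radius of the event-triggered consensus scheme.**
Under the hypotheses of the main stability theorem, the disagreement converges to the
ball of radius `ε = ((√n ‖A‖ + α ‖M 𝟙ₙ‖) ḡ + √n c_r) / |μ|` around the reference:
`limsup_{t → ∞} ‖δ t‖ ≤ ε`. -/
theorem event_triggered_consensus_convergence_radius
    (n p : ℕ) (hn : 0 < n) (hp : 0 < p)
    (L M : Matrix (Fin n) (Fin n) ℝ) (α : ℝ) (hα : 0 < α)
    (A : Matrix (Fin n × Fin p) (Fin n × Fin p) ℝ)
    (hA : A = -((L + α • M) ⊗ₖ (1 : Matrix (Fin p) (Fin p) ℝ)))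
    (hsym : (((1 : ℝ) / 2) • (A + Aᵀ)).IsHermitian)
    (μ : ℝ) (hμ : μ = ⨆ i, hsym.eigenvalues i) (hμneg : μ < 0)
    (g cr : ℝ) (hg : 0 ≤ g) (hcr : 0 ≤ cr)
    (e : ℝ → (Fin n × Fin p → ℝ)) (eL : ℝ → (Fin p → ℝ))
    (he_cont : Continuous e) (heL_cont : Continuous eL)
    (he : ∀ t, 0 ≤ t → eNorm (e t) ≤ Real.sqrt n * g)
    (heL : ∀ t, 0 ≤ t → eNorm (eL t) ≤ g)
    (xL : ℝ → (Fin p → ℝ)) (hxL : Differentiable ℝ xL)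
    (hxL' : ∀ t, 0 ≤ t → eNorm (deriv xL t) ≤ cr)
    (δ : ℝ → (Fin n × Fin p → ℝ)) (hδ : Differentiable ℝ δ)
    (hode : ∀ t, 0 ≤ t → deriv δ t =
      A.mulVec (δ t) + A.mulVec (e t)
        + ((α • M) ⊗ₖ (1 : Matrix (Fin p) (Fin p) ℝ)).mulVec (fun ij => eL t ij.2)
        - fun ij => deriv xL t ij.2)
    (ε : ℝ)
    (hε : ε = ((Real.sqrt n * specNorm A + α * eNorm (M.mulVec fun _ => (1 : ℝ))) * g
        + Real.sqrt n * cr) / |μ|) :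
    limsup (fun t => eNorm (δ t)) atTop ≤ ε := by
  have hm : 0 < |μ| := abs_pos.2 hμneg.ne
  have hmu : |μ| = -μ := abs_of_neg hμneg
  have hspec : 0 ≤ specNorm A := norm_nonneg _
  have hM0 := eNorm_nonneg' (M.mulVec fun _ => (1 : ℝ))
  have hε0 : 0 ≤ ε := by rw [hε]; positivity
  have hB : (Real.sqrt n * specNorm A + α * eNorm (M.mulVec fun _ => (1 : ℝ))) * g
        + Real.sqrt n * cr = -μ * ε := by
    rw [hε, ← hmu]; field_simp
  -- derivative of V
  have hV : ∀ t, HasDerivAt (fun t => δ t ⬝ᵥ δ t) (2 * (δ t ⬝ᵥ deriv δ t)) t := by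
    intro t
    have h1 := hasDerivAt_pi.1 (hδ t).hasDerivAt
    have h2 := HasDerivAt.fun_sum (u := Finset.univ) fun i _ => (h1 i).fun_mul (h1 i)
    simp only [dotProduct]
    refine h2.congr_deriv ?_
    rw [Finset.mul_sum]
    exact Finset.sum_congr rfl fun i _ => by ring
  have hVle : ∀ t, 0 ≤ t → 2 * (δ t ⬝ᵥ deriv δ t) ≤ μ * (δ t ⬝ᵥ δ t - ε ^ 2) := by
    intro t ht
    set b : Fin n × Fin p → ℝ := A.mulVec (e t)
        + ((α • M) ⊗ₖ (1 : Matrix (Fin p) (Fin p) ℝ)).mulVec (fun ij => eL t ij.2)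
        - fun ij => deriv xL t ij.2 with hb
    have hd : deriv δ t = A.mulVec (δ t) + b := by
      rw [hode t ht, hb]; abel
    have hbn : eNorm b ≤ -μ * ε := by
      rw [← hB]
      have h1 : eNorm (A.mulVec (e t)) ≤ specNorm A * (Real.sqrt n * g) :=
        (eNorm_mulVec_le _ _).trans (mul_le_mul_of_nonneg_left (he t ht) hspec)
      have h2 : eNorm (((α • M) ⊗ₖ (1 : Matrix (Fin p) (Fin p) ℝ)).mulVec
          (fun ij => eL t ij.2)) ≤ α * eNorm (M.mulVec fun _ => (1 : ℝ)) * g := by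
        rw [kron_mulVec, eNorm_tensor, smul_mulVec, eNorm_smul' _ hα.le]
        exact mul_le_mul_of_nonneg_left (heL t ht) (by positivity)
      have h3 : eNorm (fun ij : Fin n × Fin p => deriv xL t ij.2) ≤ Real.sqrt n * cr := by
        have := eNorm_tensor (fun _ : Fin n => (1 : ℝ)) (deriv xL t)
        simp only [one_mul] at this
        rw [this, eNorm_one]
        exact mul_le_mul_of_nonneg_left (hxL' t ht) (by positivity)
      have h4 := eNorm_sub_le' (A.mulVec (e t)
        + ((α • M) ⊗ₖ (1 : Matrix (Fin p) (Fin p) ℝ)).mulVec (fun ij => eL t ij.2))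
        (fun ij => deriv xL t ij.2)
      have h5 := eNorm_add_le' (A.mulVec (e t))
        (((α • M) ⊗ₖ (1 : Matrix (Fin p) (Fin p) ℝ)).mulVec (fun ij => eL t ij.2))
      rw [hb]
      linarith
    have h1 := rayleigh' A hsym (δ t)
    rw [← hμ] at h1
    have h2 := (dot_le_eNorm (δ t) b).trans
      (mul_le_mul_of_nonneg_left hbn (eNorm_nonneg' (δ t)))
    rw [hd, dotProduct_add]
    rw [← eNorm_sq'] at h1 ⊢
    nlinarith [mul_nonneg (neg_nonneg.2 hμneg.le) (sq_nonneg (eNorm (δ t) - ε))]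
  have hW : ∀ t, HasDerivAt (fun t => Real.exp (-μ * t) * (δ t ⬝ᵥ δ t - ε ^ 2))
      (Real.exp (-μ * t) * (2 * (δ t ⬝ᵥ deriv δ t) - μ * (δ t ⬝ᵥ δ t - ε ^ 2))) t := by
    intro t
    have h1 : HasDerivAt (fun t => Real.exp (-μ * t)) (Real.exp (-μ * t) * (-μ)) t := by
      simpa using ((hasDerivAt_id t).const_mul (-μ)).exp
    refine (h1.fun_mul ((hV t).sub_const (ε ^ 2))).congr_deriv ?_
    ring
  have hanti : AntitoneOn (fun t => Real.exp (-μ * t) * (δ t ⬝ᵥ δ t - ε ^ 2)) (Set.Ici 0) := by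
    refine antitoneOn_of_deriv_nonpos (convex_Ici 0)
      (fun t _ => (hW t).continuousAt.continuousWithinAt)
      (fun t _ => (hW t).differentiableAt.differentiableWithinAt) fun t ht => ?_
    rw [(hW t).deriv]
    have ht' : 0 ≤ t := interior_subset ht
    exact mul_nonpos_of_nonneg_of_nonpos (Real.exp_pos _).le (by linarith [hVle t ht'])
  have hbound : ∀ t, 0 ≤ t →
      eNorm (δ t) ^ 2 ≤ ε ^ 2 + Real.exp (μ * t) * (δ 0 ⬝ᵥ δ 0 - ε ^ 2) := by
    intro t ht
    have h := hanti (Set.mem_Ici.2 le_rfl) (Set.mem_Ici.2 ht) ht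
    simp only [mul_zero, Real.exp_zero, one_mul] at h
    have h2 := mul_le_mul_of_nonneg_left h (Real.exp_pos (μ * t)).le
    rw [← mul_assoc, ← Real.exp_add] at h2
    simp only [neg_mul, add_neg_cancel, Real.exp_zero, one_mul] at h2
    rw [eNorm_sq']
    linarith
  have hlim : Tendsto (fun t => ε ^ 2 + Real.exp (μ * t) * (δ 0 ⬝ᵥ δ 0 - ε ^ 2)) atTop
      (nhds (ε ^ 2)) := by
    have h1 : Tendsto (fun t => Real.exp (μ * t)) atTop (nhds 0) :=
      Real.tendsto_exp_atBot.comp (tendsto_id.const_mul_atTop_of_neg hμneg)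
    simpa using (h1.mul_const (δ 0 ⬝ᵥ δ 0 - ε ^ 2)).const_add (ε ^ 2)
  refine le_of_forall_pos_le_add fun η hη => ?_
  refine limsup_le_of_le ?_ ?_
  · exact IsBoundedUnder.isCoboundedUnder_le ⟨0, eventually_map.2 (Eventually.of_forall fun t => eNorm_nonneg' _)⟩
  · have hlt : ε ^ 2 < (ε + η) ^ 2 := by nlinarith
    filter_upwards [hlim.eventually_lt_const hlt, eventually_ge_atTop 0] with t h1 h2
    exact abs_le_of_sq_le_sq' ((hbound t h2).trans h1.le) (by positivity) |>.2
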